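/- Let q ≥ 1 be an integer, let T be a tournament, and let S₁ and S₂ be disjoint sets of vertices of T with |S₁| = q + 1 and |S₂| = q. If the number of arcs from S₁ to S₂ is at least q², then there is a q-matching from S₁ to S₂. -/

import Mathlib

open Set

/-- `T` is a tournament: irreflexive, and for distinct vertices exactly one
of the two possible arcs is present. -/
def IsTournament {V : Type*} (T : V → V → Prop) : Prop :=
  (∀ x, ¬ T x x) ∧ ∀ x y, x ≠ y → (T x y ↔ ¬ T y x)

/-- `c` is a directed cycle of length `q` in the digraph `T`. -/
def IsCycle {V : Type*} (T : V → V → Prop) (q : ℕ) (c : ZMod q → V) : Prop :=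
  Function.Injective c ∧ ∀ i, T (c i) (c (i + 1))

/-- The cycles in the family `C` are pairwise vertex-disjoint. -/
def DisjointCycles {V : Type*} {k q : ℕ} (C : Fin k → ZMod q → V) : Prop :=
  ∀ j j' : Fin k, j ≠ j' → Disjoint (Set.range (C j)) (Set.range (C j'))

/-- `T` contains `k` pairwise vertex-disjoint directed cycles of length `q`. -/
def HasDisjointCycles {V : Type*} (T : V → V → Prop) (k q : ℕ) : Prop :=
  ∃ C : Fin k → ZMod q → V, (∀ j, IsCycle T q (C j)) ∧ DisjointCycles C

/-- The out-degree of a vertex `v`. -/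
noncomputable def outDeg {V : Type*} (T : V → V → Prop) (v : V) : ℕ :=
  {w | T v w}.ncard

/-- `d⁺(v, Y)`: the number of out-neighbours of `v` inside the set `Y`. -/
noncomputable def outDegTo {V : Type*} (T : V → V → Prop) (v : V) (Y : Set V) : ℕ :=
  {w ∈ Y | T v w}.ncard

/-- `d⁺(X, v)`: the number of in-neighbours of `v` inside the set `X`. -/
noncomputable def inDegFrom {V : Type*} (T : V → V → Prop) (X : Set V) (v : V) : ℕ :=
  {x ∈ X | T x v}.ncard

/-- `d⁺(X, Y)`: the number of arcs from `X` to `Y`. -/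
noncomputable def arcs {V : Type*} (T : V → V → Prop) (X Y : Set V) : ℕ :=
  {p : V × V | p.1 ∈ X ∧ p.2 ∈ Y ∧ T p.1 p.2}.ncard

/-- There is an `r`-matching from `X` to `Y`: `r` arcs from `X` to `Y` that
pairwise share no endpoints. -/
def HasMatching {V : Type*} (T : V → V → Prop) (X Y : Set V) (r : ℕ) : Prop :=
  ∃ e : Fin r → V × V,
    (∀ i, (e i).1 ∈ X ∧ (e i).2 ∈ Y ∧ T (e i).1 (e i).2) ∧
    ∀ i j, i ≠ j → (e i).1 ≠ (e j).1 ∧ (e i).2 ≠ (e j).2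

/-- `u` is a Hamiltonian path of the subtournament induced on `S`, written as
`P = (u_{l} … u₂ u₁)`: the vertex `u ⟨0,_⟩` is `u₁`, and each arc goes from the
higher-indexed vertex to the next lower-indexed one. -/
def IsHamPathOn {V : Type*} (T : V → V → Prop) (S : Set V) {l : ℕ}
    (u : Fin l → V) : Prop :=
  Function.Injective u ∧ Set.range u = S ∧
    ∀ (i : ℕ) (h : i + 1 < l), T (u ⟨i + 1, h⟩) (u ⟨i, Nat.lt_of_succ_lt h⟩)

/-
With `X = S₁` and `Y = S₂`, at most `q (q + 1) - q ^ 2 = q` of the pairs in `X × Y` are not arcs,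
which is fewer than `|X|`. A set `A ⊆ Y` violating Hall's condition would produce too many of them:
with `s` the number of vertices of `X` that have no out-neighbour in `A`, no pair of the
corresponding `s × |A|` rectangle is an arc. Both factors are at least `1` and their sum exceeds
`|X|`, so their product is at least `|X|`. Hence Hall's theorem matches all of `Y` into `X`.
-/

section

variable {V : Type*} {T : V → V → Prop} {X Y A : Set V}

/-- The in-neighbourhood `N⁻(A) ∩ X` of a set `A`, the neighbourhood to which Hall's condition
applies when `Y` is matched into `X`. -/
def inNeighborsFrom (T : V → V → Prop) (X A : Set V) : Set V :=
  {x ∈ X | ∃ y ∈ A, T x y}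

theorem inNeighborsFrom_subset : inNeighborsFrom T X A ⊆ X :=
  sep_subset _ _

theorem HasMatching.of_injective (hY : Y.Finite) (f : Y → X) (hf : f.Injective)
    (hT : ∀ y, T (f y) y) : HasMatching T X Y Y.ncard := by
  have := hY.to_subtype
  let g : Fin Y.ncard ≃ Y := (Finite.equivFin Y).symm
  refine ⟨fun i ↦ (f (g i), g i), fun i ↦ ⟨(f (g i)).2, (g i).2, hT (g i)⟩, fun i j hij ↦ ?_⟩
  have hg : g i ≠ g j := g.injective.ne hij
  exact ⟨Subtype.val_injective.ne (hf.ne hg), Subtype.val_injective.ne hg⟩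

theorem HasMatching.of_hall (hX : X.Finite) (hY : Y.Finite)
    (hall : ∀ A ⊆ Y, A.ncard ≤ (inNeighborsFrom T X A).ncard) :
    HasMatching T X Y Y.ncard := by
  classical
  have := hX.fintype
  have card_le (A : Finset Y) : A.card ≤ Finset.card {x : X | ∃ y ∈ A, T x y} := by
    have hN : inNeighborsFrom T X ((↑) '' (A : Set Y)) =
        (↑) '' (({x : X | ∃ y ∈ A, T x y} : Finset X) : Set X) := by
      ext x
      simp [inNeighborsFrom, and_comm]
    have hA := hall ((↑) '' (A : Set Y)) (Subtype.coe_image_subset Y A)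
    rwa [hN, ncard_image_of_injective _ Subtype.val_injective,
      ncard_image_of_injective _ Subtype.val_injective, ncard_coe_finset, ncard_coe_finset] at hA
  obtain ⟨f, hf, hT⟩ :=
    (Fintype.all_card_le_filter_rel_iff_exists_injective fun (y : Y) (x : X) ↦ T x y).1 card_le
  exact HasMatching.of_injective hY f hf hT

theorem arcs_add_ncard_sdiff_inNeighborsFrom_mul_ncard_le (hX : X.Finite) (hY : Y.Finite)
    (hA : A ⊆ Y) :
    arcs T X Y + (X \ inNeighborsFrom T X A).ncard * A.ncard ≤ X.ncard * Y.ncard := by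
  have arcs_sub : {p : V × V | p.1 ∈ X ∧ p.2 ∈ Y ∧ T p.1 p.2} ⊆ X ×ˢ Y :=
    fun p hp ↦ ⟨hp.1, hp.2.1⟩
  have nonarcs_sub : (X \ inNeighborsFrom T X A) ×ˢ A ⊆ X ×ˢ Y := prod_mono sdiff_subset hA
  have hdisj : Disjoint {p : V × V | p.1 ∈ X ∧ p.2 ∈ Y ∧ T p.1 p.2}
      ((X \ inNeighborsFrom T X A) ×ˢ A) :=
    disjoint_left.2 fun p hp hpA ↦ hpA.1.2 ⟨hp.1, p.2, hpA.2, hp.2.2⟩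
  have hfin : (X ×ˢ Y).Finite := hX.prod hY
  rw [arcs, ← ncard_prod, ← ncard_prod,
    ← ncard_union_eq hdisj (hfin.subset arcs_sub) (hfin.subset nonarcs_sub)]
  exact ncard_le_ncard (union_subset arcs_sub nonarcs_sub) hfin

theorem stmt5_general (hX : X.Finite) (hY : Y.Finite) (hcard : Y.ncard ≤ X.ncard)
    (harcs : X.ncard * Y.ncard < arcs T X Y + X.ncard) : HasMatching T X Y Y.ncard := by
  refine .of_hall hX hY fun A hA ↦ ?_
  by_contra! hlt
  have hsum := ncard_sdiff_add_ncard_of_subset (inNeighborsFrom_subset (T := T) (A := A)) hX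
  have hAX : A.ncard ≤ X.ncard := (ncard_le_ncard hA hY).trans hcard
  have hprod := arcs_add_ncard_sdiff_inNeighborsFrom_mul_ncard_le (T := T) hX hY hA
  have hsize : X.ncard < (X \ inNeighborsFrom T X A).ncard + A.ncard := by lia
  have hrect : X.ncard ≤ (X \ inNeighborsFrom T X A).ncard * A.ncard :=
    (Nat.le_sub_one_of_lt hsize).trans (Nat.add_sub_one_le_mul (by lia) (by lia))
  lia

end

theorem stmt5 {V : Type*} [Fintype V] (T : V → V → Prop) (hT : IsTournament T)
    (q : ℕ) (hq : 1 ≤ q) (S₁ S₂ : Set V) (hdisj : Disjoint S₁ S₂)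
    (h1 : S₁.ncard = q + 1) (h2 : S₂.ncard = q)
    (harcs : q ^ 2 ≤ arcs T S₁ S₂) :
    HasMatching T S₁ S₂ q :=
  h2 ▸ stmt5_general (toFinite S₁) (toFinite S₂) (by lia) (by rw [h1, h2]; linarith)
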